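/- arXiv:1909.09106 — 7 statements merged into one kernel-verified Lean document; each statement's English description precedes it below -/
import Mathlib

section
/- Let (X,d) be a complete and locally compact length space and suppose the map f : X × ℝ_{≥0} → Σ(X), f(x,t) = B̄_t(x), is an isometry from the taxicab metric d_T to the Hausdorff distance d_H. Then for every x, y ∈ X with y ≠ x and every r > 0 there exists a point p ∈ B̄_r(x) with d(p,x) = r and d(p,y) = d(x,y) + r, i.e., sup_{a ∈ B̄_r(x)} d(a,y) = d(x,y) + r and the supremum is attained on the boundary of the ball. -/
/-!
Taking the second radius to be `0`, the isometry hypothesis says that the supremum of `dist a y`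
over `a ∈ closedBall x r` is `dist x y + r`. When the ball is compact the supremum is attained,
and the maximizer lies on the sphere by the triangle inequality
(`exists_extension_of_isCompact`). By local compactness this applies to small balls.

Large balls are reached by prolonging step by step, so that the Hopf–Rinow theorem is not needed.
Among the points `p` with `dist p y = dist x y + dist x p` and `dist x p ≤ r`, order `p` before `q`
when `dist q y = dist p y + dist p q`. On a chain, `dist · y` is an isometry into a bounded set of
reals, so completeness gives an upper bound (`exists_upper_bound_of_chain`). A maximal element
given by Zorn's lemma is at distance `r` from `x`, since otherwise it could be prolonged inside a
small compact ball.
-/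

/-- A metric space is a *length space* if the distance between any two points equals the
infimum of the lengths of continuous paths joining them. -/
def IsLengthSpace (X : Type*) [MetricSpace X] : Prop :=
  ∀ x y : X, edist x y = ⨅ γ : Path x y, eVariationOn (fun t => γ t) Set.univ

/-- The point `p` lies metrically between `y` and `q`; this is used to
order prolongations away from `y`. -/
def Prolongs {X : Type*} [MetricSpace X] (y p q : X) : Prop :=
  dist q y = dist p y + dist p q

lemma Prolongs.trans {X : Type*} [MetricSpace X] {y a b c : X}
    (hab : Prolongs y a b) (hbc : Prolongs y b c) : Prolongs y a c := by
  unfold Prolongs at *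
  have h1 := dist_triangle a b c
  have h2 := dist_triangle c a y
  rw [dist_comm c a] at h2
  linarith

lemma exists_extension_of_isCompact {X : Type*} [MetricSpace X]
    (hiso : ∀ (x y : X) (t s : ℝ), 0 ≤ t → 0 ≤ s →
      Metric.hausdorffDist (Metric.closedBall x t) (Metric.closedBall y s)
        = dist x y + |t - s|)
    (m y : X) {ε : ℝ} (hε : 0 < ε) (hK : IsCompact (Metric.closedBall m ε)) :
    ∃ p, dist m p = ε ∧ Prolongs y m p := by
  have hm : m ∈ Metric.closedBall m ε := Metric.mem_closedBall_self hε.le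
  obtain ⟨p, hp, hmax⟩ := hK.exists_isMaxOn ⟨m, hm⟩
    (f := fun a => dist a y) (by fun_prop)
  have hmax' : ∀ a ∈ Metric.closedBall m ε, dist a y ≤ dist p y := fun a ha => hmax ha
  have h := hiso m y ε 0 hε.le le_rfl
  rw [Metric.closedBall_zero, sub_zero, abs_of_pos hε] at h
  have hle : Metric.hausdorffDist (Metric.closedBall m ε) {y} ≤ dist p y := by
    refine Metric.hausdorffDist_le_of_mem_dist dist_nonneg
      (fun a ha => ⟨y, rfl, hmax' a ha⟩) ?_
    rintro b rfl
    exact ⟨m, hm, by rw [dist_comm]; exact hmax' m hm⟩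
  have h1 : dist p m ≤ ε := hp
  have h2 := dist_triangle p m y
  have h3 : dist m p = ε := by rw [dist_comm]; linarith
  refine ⟨p, h3, ?_⟩
  rw [dist_comm] at h3
  unfold Prolongs
  rw [dist_comm m p]
  linarith

/-- A nonempty chain of points at bounded distance from `y` has an upper bound in its closure: the
limit of any sequence along which the distance to `y` tends to its supremum. -/
lemma exists_upper_bound_of_chain {X : Type*} [MetricSpace X] [CompleteSpace X]
    (y : X) (c : Set X) (hc : c.Nonempty)
    (hchain : ∀ a ∈ c, ∀ b ∈ c, Prolongs y a b ∨ Prolongs y b a)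
    (hbdd : BddAbove ((fun a => dist a y) '' c)) :
    ∃ p ∈ closure c, ∀ a ∈ c, Prolongs y a p := by
  have hdist : ∀ a ∈ c, ∀ b ∈ c, dist a b = |dist a y - dist b y| := by
    intro a ha b hb
    rcases hchain a ha b hb with h | h <;> unfold Prolongs at h
    · rw [h, abs_sub_comm, add_sub_cancel_left, abs_of_nonneg dist_nonneg]
    · rw [h, add_sub_cancel_left, abs_of_nonneg dist_nonneg, dist_comm]
  obtain ⟨v, -, hv, hvc⟩ := exists_seq_tendsto_sSup (hc.image _) hbdd
  choose u hu huv using hvc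
  have huv' : ∀ n, dist (u n) y = v n := huv
  have hcau : CauchySeq u := by
    rw [Metric.cauchySeq_iff]
    intro ε hε
    obtain ⟨N, hN⟩ := Metric.cauchySeq_iff.1 hv.cauchySeq ε hε
    refine ⟨N, fun m hm n hn => ?_⟩
    rw [hdist _ (hu m) _ (hu n), huv', huv', ← Real.dist_eq]
    exact hN m hm n hn
  obtain ⟨p, hp⟩ := cauchySeq_tendsto_of_complete hcau
  have hpy : dist p y = sSup ((fun a => dist a y) '' c) := by
    refine tendsto_nhds_unique (hp.dist tendsto_const_nhds) ?_
    simpa only [huv'] using hv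
  refine ⟨p, mem_closure_of_tendsto hp (Filter.Eventually.of_forall hu), fun a ha => ?_⟩
  have h1 : dist a y ≤ dist p y := hpy ▸ le_csSup hbdd ⟨a, ha, rfl⟩
  have h2 : dist a p = |dist a y - dist p y| := by
    refine tendsto_nhds_unique (tendsto_const_nhds.dist hp) ?_
    simp only [hdist a ha _ (hu _)]
    exact (tendsto_const_nhds.sub (hp.dist tendsto_const_nhds)).abs
  unfold Prolongs
  rw [h2, abs_sub_comm, abs_of_nonneg (by linarith)]
  ring

/-- If, in a complete and locally compact length space, the map `f(x,t) = B̄_t(x)` is an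
isometry from the taxicab metric to the Hausdorff distance, then for every `y ≠ x` and `r > 0`
there is `p ∈ B̄_r(x)` with `d(p,x) = r` and `d(p,y) = d(x,y) + r`; in particular
`sup_{a ∈ B̄_r(x)} d(a,y) = d(x,y) + r` is attained on the boundary of the ball. -/
theorem exists_boundary_point_of_isometry
    {X : Type*} [MetricSpace X] [CompleteSpace X] [LocallyCompactSpace X]
    (hX : IsLengthSpace X)
    (hiso : ∀ (x y : X) (t s : ℝ), 0 ≤ t → 0 ≤ s →
      Metric.hausdorffDist (Metric.closedBall x t) (Metric.closedBall y s)
        = dist x y + |t - s|) :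
    ∀ (x y : X), y ≠ x → ∀ r : ℝ, 0 < r →
      ∃ p ∈ Metric.closedBall x r, dist p x = r ∧ dist p y = dist x y + r ∧
        ∀ a ∈ Metric.closedBall x r, dist a y ≤ dist x y + r := by
  intro x y _ r hr
  let S : Set X := {p | Prolongs y x p ∧ dist x p ≤ r}
  have hS : IsClosed S := by
    have h1 : IsClosed {p : X | dist p y = dist x y + dist x p} :=
      isClosed_eq (by fun_prop) (by fun_prop)
    have h2 : IsClosed {p : X | dist x p ≤ r} := isClosed_le (by fun_prop) (by fun_prop)
    exact h1.inter h2
  have hxS : x ∈ S := ⟨by simp [Prolongs], by simpa using hr.le⟩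
  obtain ⟨⟨m, hmS⟩, hmax⟩ := exists_maximal_of_chains_bounded
    (r := fun a b : S => Prolongs y (a : X) (b : X))
    (by
      intro c hc
      rcases c.eq_empty_or_nonempty with rfl | hne
      · exact ⟨⟨x, hxS⟩, by simp⟩
      have hsub : Subtype.val '' c ⊆ S := by
        rintro _ ⟨a, -, rfl⟩
        exact a.2
      obtain ⟨p, hp, hub⟩ := exists_upper_bound_of_chain y (Subtype.val '' c) (hne.image _)
        (by
          rintro _ ⟨a, ha, rfl⟩ _ ⟨b, hb, rfl⟩
          by_cases hab : a = b
          · left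
            simp [Prolongs, hab]
          · exact hc ha hb hab)
        (by
          refine ⟨dist x y + r, ?_⟩
          rintro _ ⟨a, ha, rfl⟩
          have h1 : dist a y = dist x y + dist x a := (hsub ha).1
          have h2 : dist x a ≤ r := (hsub ha).2
          simp only
          linarith)
      exact ⟨⟨p, closure_minimal hsub hS hp⟩, fun a ha => hub a ⟨a, ha, rfl⟩⟩)
    (fun hab hbc => hab.trans hbc)
  obtain ⟨hm1, hm2⟩ : Prolongs y x m ∧ dist x m ≤ r := hmS
  have hmr : dist x m = r := by
    by_contra hne
    have hlt : dist x m < r := lt_of_le_of_ne hm2 hne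
    obtain ⟨K, hK, hKm⟩ := exists_compact_mem_nhds m
    obtain ⟨δ, hδ, hδK⟩ := Metric.nhds_basis_closedBall.mem_iff.1 hKm
    have hε : 0 < min δ (r - dist x m) := lt_min hδ (by linarith)
    obtain ⟨p, hp1, hp2⟩ := exists_extension_of_isCompact hiso m y hε
      (hK.of_isClosed_subset Metric.isClosed_closedBall
        ((Metric.closedBall_subset_closedBall (min_le_left _ _)).trans hδK))
    have hle : dist x p ≤ r := by
      have h1 := dist_triangle x m p
      have h2 := min_le_right δ (r - dist x m)
      linarith
    have hback : Prolongs y p m := hmax ⟨p, hm1.trans hp2, hle⟩ hp2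
    unfold Prolongs at hback hp2
    rw [dist_comm p m] at hback
    linarith
  unfold Prolongs at hm1
  refine ⟨m, ?_, ?_, ?_, fun a ha => ?_⟩
  · rw [Metric.mem_closedBall, dist_comm, hmr]
  · rw [dist_comm, hmr]
  · rw [hm1, hmr]
  · have h1 := dist_triangle a x y
    have h2 : dist a x ≤ r := ha
    linarith
end

section
/- Let (X,d) be a complete and locally compact length space and let {x_n} be a sequence of points of X each of which satisfies the shooting property. If x_n converges to x ∈ X, then x satisfies the shooting property. Consequently, the set of points of X satisfying the shooting property is closed. -/
/-- A point `x` satisfies the *shooting property* if for every `r > 0` and `y ≠ x` there is a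
point `p` in the boundary of `B̄_r(x)` and a geodesic segment `γ : [0, d(x,y)+r] → X`
parameterized by arc length with `γ(0) = y`, `γ(d(x,y)) = x` and `γ(d(x,y)+r) = p`. -/
def ShootingAt {X : Type*} [MetricSpace X] (x : X) : Prop :=
  ∀ r : ℝ, 0 < r → ∀ y : X, y ≠ x →
    ∃ p ∈ frontier (Metric.closedBall x r), ∃ γ : ℝ → X,
      γ 0 = y ∧ γ (dist x y) = x ∧ γ (dist x y + r) = p ∧
      ∀ u ∈ Set.Icc (0:ℝ) (dist x y + r), ∀ v ∈ Set.Icc (0:ℝ) (dist x y + r),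
        dist (γ u) (γ v) = |u - v|

open Filter Topology Metric

/-- Enlarging the radius of a ball by `δ` adds only points at distance about `δ` from it. -/
lemma IsLengthSpace.exists_mem_closedBall_dist_lt {X : Type*} [MetricSpace X]
    (hX : IsLengthSpace X) (p q : X) {r δ ε : ℝ} (hr : 0 ≤ r) (hδ : 0 ≤ δ) (hδε : δ < ε)
    (hq : dist p q ≤ r + δ) :
    ∃ z ∈ closedBall p r, dist z q < ε := by
  rcases le_or_gt (dist p q) r with h | h
  · exact ⟨q, by rwa [mem_closedBall, dist_comm], by rw [dist_self]; linarith⟩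
  have hlt : edist p q < ENNReal.ofReal (r + ε) := by
    rw [edist_dist]
    exact (ENNReal.ofReal_lt_ofReal_iff (by linarith)).2 (by linarith)
  rw [hX p q, iInf_lt_iff] at hlt
  obtain ⟨c, hc⟩ := hlt
  have hcont : Continuous fun t => dist p (c t) := by fun_prop
  obtain ⟨t, ht⟩ : ∃ t, dist p (c t) = r := by
    have := intermediate_value_univ (0 : unitInterval) 1 hcont
    exact this ⟨by simpa using hr, by simpa using h.le⟩
  refine ⟨c t, by rw [mem_closedBall, dist_comm, ht], ?_⟩
  -- the part of `c` before `t` has length at least `r`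
  have hsum : edist p (c t) + edist (c t) q ≤ eVariationOn (fun t => c t) Set.univ := by
    calc edist p (c t) + edist (c t) q
        ≤ eVariationOn (fun t => c t) (Set.Iic t) + eVariationOn (fun t => c t) (Set.Ici t) := by
          gcongr
          · simpa using eVariationOn.edist_le (fun t => c t) (s := Set.Iic t)
              (x := 0) (y := t) t.2.1 Set.self_mem_Iic
          · simpa using eVariationOn.edist_le (fun t => c t) (s := Set.Ici t)
              (x := t) (y := 1) Set.self_mem_Ici t.2.2
      _ ≤ eVariationOn (fun t => c t) (Set.Iic t ∪ Set.Ici t) :=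
          eVariationOn.add_le_union _ fun a ha b hb => le_trans ha hb
      _ ≤ _ := eVariationOn.mono _ (Set.subset_univ _)
  have h2 := hsum.trans_lt hc
  rw [edist_dist, edist_dist, ← ENNReal.ofReal_add dist_nonneg dist_nonneg,
    ENNReal.ofReal_lt_ofReal_iff (by linarith), ht] at h2
  linarith

/-- The Hopf–Rinow–Cohn-Vossen theorem. -/
lemma IsLengthSpace.isCompact_closedBall {X : Type*} [MetricSpace X] [CompleteSpace X]
    [LocallyCompactSpace X] (hX : IsLengthSpace X) (p : X) (r : ℝ) :
    IsCompact (closedBall p r) := by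
  by_contra hr
  let S : Set ℝ := {s | 0 ≤ s ∧ IsCompact (closedBall p s)}
  have h0 : (0 : ℝ) ∈ S := ⟨le_rfl, by simp⟩
  have hbd : BddAbove S := by
    refine ⟨r, fun s hs => ?_⟩
    by_contra! h
    exact hr (hs.2.of_isClosed_subset isClosed_closedBall (closedBall_subset_closedBall h.le))
  have hR0 : 0 ≤ sSup S := le_csSup hbd h0
  have hlt : ∀ s < sSup S, IsCompact (closedBall p s) := by
    intro s hs
    obtain ⟨t, ht, hst⟩ := exists_lt_of_lt_csSup ⟨0, h0⟩ hs
    exact ht.2.of_isClosed_subset isClosed_closedBall (closedBall_subset_closedBall hst.le)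
  have hR : IsCompact (closedBall p (sSup S)) := by
    rcases hR0.eq_or_lt with h | h
    · rw [← h]; exact h0.2
    refine isCompact_iff_totallyBounded_isComplete.2 ⟨?_, isClosed_closedBall.isComplete⟩
    rw [totallyBounded_iff]
    intro ε hε
    set δ := min (ε / 4) (sSup S)
    have hδ : 0 < δ := lt_min (by linarith) h
    have hδε : δ ≤ ε / 4 := min_le_left _ _
    have hδR : δ ≤ sSup S := min_le_right _ _
    obtain ⟨F, hF, hcov⟩ := totallyBounded_iff.1
      (hlt (sSup S - δ) (by linarith)).totallyBounded (ε / 2) (by linarith)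
    refine ⟨F, hF, fun q hq => ?_⟩
    rw [mem_closedBall, dist_comm] at hq
    obtain ⟨z, hz, hzq⟩ := hX.exists_mem_closedBall_dist_lt p q (r := sSup S - δ) (δ := δ)
      (ε := ε / 2) (by linarith) hδ.le (by linarith) (by linarith)
    have hz' := hcov hz
    simp only [Set.mem_iUnion, mem_ball, exists_prop] at hz' ⊢
    obtain ⟨w, hw, hzw⟩ := hz'
    refine ⟨w, hw, ?_⟩
    have := dist_triangle_left q w z
    linarith
  obtain ⟨δ, hδ, hK⟩ := hR.exists_isCompact_cthickening
  have hmem : sSup S + δ / 2 ∈ S := by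
    refine ⟨by linarith, hK.of_isClosed_subset isClosed_closedBall fun q hq => ?_⟩
    rw [mem_closedBall, dist_comm] at hq
    obtain ⟨z, hz, hzq⟩ := hX.exists_mem_closedBall_dist_lt p q (δ := δ / 2) (ε := δ)
      hR0 (by linarith) (by linarith) hq
    exact mem_cthickening_of_dist_le q z δ _ hz (by rw [dist_comm]; exact hzq.le)
  linarith [le_csSup hbd hmem]

lemma ShootingAt.of_tendsto {X : Type*} [MetricSpace X] [CompleteSpace X]
    [LocallyCompactSpace X] (hX : IsLengthSpace X) (x : ℕ → X) (hx : ∀ n, ShootingAt (x n))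
    (p : X) (hconv : Tendsto x atTop (𝓝 p)) : ShootingAt p := by
  intro r hr y hy
  have hne : ∀ᶠ n in atTop, y ≠ x n :=
    (hconv.eventually_ne hy.symm).mono fun _ h => h.symm
  have hd : Tendsto (fun n => dist (x n) y) atTop (𝓝 (dist p y)) := hconv.dist tendsto_const_nhds
  have hex : ∀ n, ∃ c : ℝ → X, y ≠ x n → c 0 = y ∧ c (dist (x n) y) = x n ∧
      ∀ u ∈ Set.Icc (0:ℝ) (dist (x n) y + (r + 1)), ∀ v ∈ Set.Icc (0:ℝ) (dist (x n) y + (r + 1)),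
        dist (c u) (c v) = |u - v| := by
    intro n
    by_cases h : y = x n
    · exact ⟨fun _ => y, fun h' => absurd h h'⟩
    · obtain ⟨_, _, c, h1, h2, _, h3⟩ := hx n (r + 1) (by linarith) y h
      exact ⟨c, fun _ => ⟨h1, h2, h3⟩⟩
  choose c hc using hex
  set T := dist p y + r + 1 / 2 with hT
  have hdp : 0 ≤ dist p y := dist_nonneg
  let U : Ultrafilter ℕ := hyperfilter ℕ
  have hU : (U : Filter ℕ) ≤ atTop := by
    rw [← Nat.cofinite_eq_atTop]; exact hyperfilter_le_cofinite
  have hgood : ∀ᶠ n in (U : Filter ℕ), y ≠ x n ∧ T < dist (x n) y + (r + 1) :=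
    hU (hne.and ((hd.eventually_const_lt (u := dist p y - 1 / 2) (by linarith)).mono
      fun n hn => by linarith))
  have hlim : ∀ u, ∃ z, u ∈ Set.Icc 0 T → Tendsto (fun n => c n u) U (𝓝 z) := by
    intro u
    by_cases hu : u ∈ Set.Icc 0 T
    · have hball : ∀ᶠ n in (U : Filter ℕ), c n u ∈ closedBall y T := by
        filter_upwards [hgood] with n hn
        obtain ⟨h1, _, h3⟩ := hc n hn.1
        have := h3 u ⟨hu.1, hu.2.trans hn.2.le⟩ 0 ⟨le_rfl, by linarith [hu.1, hu.2, hn.2]⟩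
        rw [h1, sub_zero, abs_of_nonneg hu.1] at this
        rw [mem_closedBall, this]
        exact hu.2
      obtain ⟨z, _, hz⟩ := (hX.isCompact_closedBall y T).ultrafilter_le_nhds
        (U.map fun n => c n u) (le_principal_iff.2 hball)
      exact ⟨z, fun _ => hz⟩
    · exact ⟨y, fun h => absurd h hu⟩
  choose g hg using hlim
  have hgd : ∀ u ∈ Set.Icc 0 T, ∀ v ∈ Set.Icc 0 T, dist (g u) (g v) = |u - v| := by
    intro u hu v hv
    refine tendsto_nhds_unique ((hg u hu).dist (hg v hv)) (tendsto_const_nhds.congr' ?_)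
    filter_upwards [hgood] with n hn
    exact ((hc n hn.1).2.2 u ⟨hu.1, hu.2.trans hn.2.le⟩ v ⟨hv.1, hv.2.trans hn.2.le⟩).symm
  have hg0 : g 0 = y := by
    refine tendsto_nhds_unique (hg 0 ⟨le_rfl, by linarith⟩) (tendsto_const_nhds.congr' ?_)
    filter_upwards [hgood] with n hn
    exact (hc n hn.1).1.symm
  have hpT : dist p y ∈ Set.Icc 0 T := ⟨hdp, by linarith⟩
  have hgp : g (dist p y) = p := by
    -- `c n (dist p y)` and `x n = c n (dist (x n) y)` are `|dist p y - dist (x n) y|` apart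
    have h1 : Tendsto (fun n => dist (c n (dist p y)) (x n)) U (𝓝 0) := by
      have h2 : Tendsto (fun n => |dist p y - dist (x n) y|) U (𝓝 0) := by
        simpa using ((tendsto_const_nhds (x := dist p y)).sub (hd.mono_left hU)).abs
      refine h2.congr' ?_
      filter_upwards [hgood] with n hn
      obtain ⟨_, h4, h3⟩ := hc n hn.1
      have h5 := h3 (dist p y) ⟨hdp, hpT.2.trans hn.2.le⟩ (dist (x n) y)
        ⟨dist_nonneg, by linarith⟩
      rw [h4] at h5
      exact h5.symm
    exact dist_eq_zero.1 (tendsto_nhds_unique ((hg _ hpT).dist (hconv.mono_left hU)) h1)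
  have hend : dist p y + r ∈ Set.Icc 0 T := ⟨by linarith, by linarith⟩
  refine ⟨g (dist p y + r), ?_, g, hg0, hgp, rfl, fun u hu v hv =>
    hgd u ⟨hu.1, hu.2.trans hend.2⟩ v ⟨hv.1, hv.2.trans hend.2⟩⟩
  rw [frontier_eq_closure_inter_closure]
  constructor
  · refine subset_closure ?_
    have h := hgd _ hend _ hpT
    rw [hgp, add_sub_cancel_left, abs_of_pos hr] at h
    exact h.le
  · rw [Metric.mem_closure_iff]
    intro ε hε
    set η := min (ε / 2) (1 / 2)
    have hη : 0 < η := lt_min (by linarith) (by norm_num)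
    have hη1 : η ≤ ε / 2 := min_le_left _ _
    have hη2 : η ≤ 1 / 2 := min_le_right _ _
    have hm : dist p y + r + η ∈ Set.Icc 0 T := ⟨by linarith, by linarith⟩
    refine ⟨g (dist p y + r + η), ?_, ?_⟩
    · have h := hgd _ hm _ hpT
      rw [hgp, abs_of_pos (by linarith)] at h
      rw [Set.mem_compl_iff, mem_closedBall, h]
      linarith
    · rw [hgd _ hend _ hm, abs_sub_comm, abs_of_pos (by linarith)]
      linarith

/-- In a complete and locally compact length space, if a sequence of points satisfying the
shooting property converges to `x`, then `x` satisfies the shooting property; consequently,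
the set of points satisfying the shooting property is closed. -/
theorem shooting_closed
    {X : Type*} [MetricSpace X] [CompleteSpace X] [LocallyCompactSpace X]
    (hX : IsLengthSpace X)
    (x : ℕ → X) (hx : ∀ n, ShootingAt (x n)) (p : X)
    (hconv : Filter.Tendsto x Filter.atTop (nhds p)) :
    ShootingAt p ∧ IsClosed {z : X | ShootingAt z} := by
  exact ⟨ShootingAt.of_tendsto hX x hx p hconv, IsSeqClosed.isClosed
    fun z q hz hq => ShootingAt.of_tendsto hX z hz q hq⟩
end

section
/- Let (X,d) be a complete and locally compact length space satisfying both the shooting property and the tangency property. Then every isometry F of (Σ(X), d_H) gives rise to an isometry of (X,d): F maps, for each t ≥ 0, the set Σ_t = {B̄_t(x) : x ∈ X} onto Σ_r for some r ≥ 0, and there exist R ≥ 0 and a surjective isometry f : X → X such that F({x}) = B̄_R(f(x)) for every x ∈ X. -/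
/-- `(X,d)` satisfies the *tangency property* if every pair of points has a unique midpoint:
`∂B̄_{d(p,q)/2}(p) ∩ ∂B̄_{d(p,q)/2}(q)` consists of a single point. -/
def TangencyProperty (X : Type*) [MetricSpace X] : Prop :=
  ∀ p q : X, ∃! z : X,
    z ∈ frontier (Metric.closedBall p (dist p q / 2)) ∩
        frontier (Metric.closedBall q (dist p q / 2))

/-- A subset of `X` is an element of `Σ(X)` if it is a closed ball. -/
def IsBall {X : Type*} [MetricSpace X] (A : Set X) : Prop :=
  ∃ (x : X) (t : ℝ), 0 ≤ t ∧ A = Metric.closedBall x t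

lemma exists_ne_of_tangency {X : Type*} [MetricSpace X] (htan : TangencyProperty X) (x : X) :
    ∃ y : X, y ≠ x := by
  by_contra h
  push Not at h
  obtain ⟨z, hz, -⟩ := htan x x
  -- If `x` is the only point, every set is clopen and so has empty frontier.
  have : Subsingleton X := ⟨fun a b => (h a).trans (h b).symm⟩
  have hfr := hz.1
  rw [(isClopen_discrete _).frontier_eq] at hfr
  exact hfr

/-- The geodesic through `x` starting at `y` extends beyond `x` by any length `t`. -/
lemma exists_extension {X : Type*} [MetricSpace X] (hshoot : ∀ x : X, ShootingAt x)
    {x y : X} (hxy : y ≠ x) {t : ℝ} (ht : 0 ≤ t) :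
    ∃ p : X, dist x p = t ∧ dist y p = dist x y + t := by
  rcases ht.eq_or_lt with rfl | ht
  · exact ⟨x, by simp, by simp [dist_comm]⟩
  · obtain ⟨p, -, γ, h0, h1, h2, h⟩ := hshoot x t ht y hxy
    have hd : 0 ≤ dist x y := dist_nonneg
    refine ⟨p, ?_, ?_⟩
    · rw [← h2]
      nth_rewrite 1 [← h1]
      rw [h _ ⟨hd, by linarith⟩ _ ⟨by linarith, le_rfl⟩]
      rw [abs_sub_comm, abs_of_nonneg] <;> linarith
    · rw [← h2, ← h0, h _ ⟨le_rfl, by linarith⟩ _ ⟨by rw [h0]; linarith, by rw [h0]⟩, h0]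
      rw [abs_sub_comm, abs_of_nonneg] <;> linarith

/-- `X` is geodesic: this already follows from the shooting property. -/
lemma exists_geodesic_point {X : Type*} [MetricSpace X] (hshoot : ∀ x : X, ShootingAt x)
    (x y : X) {a : ℝ} (ha : 0 ≤ a) (had : a ≤ dist x y) :
    ∃ z : X, dist x z = a ∧ dist z y = dist x y - a := by
  by_cases hxy : y = x
  · subst hxy
    rw [dist_self] at had
    exact ⟨y, by simp; linarith, by simp; linarith⟩
  · obtain ⟨p, -, γ, h0, h1, h2, h⟩ := hshoot x 1 one_pos y hxy
    refine ⟨γ (dist x y - a), ?_, ?_⟩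
    · nth_rewrite 1 [← h1]
      rw [h _ ⟨by linarith, by linarith⟩ _ ⟨by linarith, by linarith⟩, abs_of_nonneg] <;> linarith
    · nth_rewrite 2 [← h0]
      rw [h _ ⟨by linarith, by linarith⟩ _ ⟨by linarith, by linarith⟩, abs_of_nonneg] <;> linarith

/-- Uniqueness of metric midpoints. By the shooting property every point at distance `r` from `p`
lies on the frontier of `B̄_r(p)`, so the tangency property applies to metric midpoints. -/
lemma metric_midpoint_unique {X : Type*} [MetricSpace X] (hshoot : ∀ x : X, ShootingAt x)
    (htan : TangencyProperty X) {x y z w : X}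
    (hz1 : dist x z = dist x y / 2) (hz2 : dist z y = dist x y / 2)
    (hw1 : dist x w = dist x y / 2) (hw2 : dist w y = dist x y / 2) : z = w := by
  by_cases hxy : x = y
  · subst hxy
    simp at hz1 hw1
    rw [← hz1, hw1]
  have hpos : 0 < dist x y := dist_pos.2 hxy
  have key : ∀ (p q : X) (r : ℝ), 0 < r → dist p q = r → q ∈ frontier (Metric.closedBall p r) := by
    intro p q r hr hpq
    rw [frontier, Metric.isClosed_closedBall.closure_eq]
    refine ⟨by simp [dist_comm, hpq], fun hq => ?_⟩
    obtain ⟨ε, hε, hsub⟩ := Metric.mem_nhds_iff.1 (mem_interior_iff_mem_nhds.1 hq)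
    have hne : p ≠ q := by
      rintro rfl
      simp at hpq
      linarith
    obtain ⟨u, hu1, hu2⟩ := exists_extension hshoot hne (half_pos hε).le
    have hu : u ∈ Metric.ball q ε := by
      rw [Metric.mem_ball, dist_comm, hu1]
      linarith
    have := hsub hu
    rw [Metric.mem_closedBall, dist_comm, hu2, dist_comm, hpq] at this
    linarith
  exact (htan x y).unique
    ⟨key _ _ _ (half_pos hpos) hz1, key _ _ _ (half_pos hpos) (by rw [dist_comm, hz2])⟩
    ⟨key _ _ _ (half_pos hpos) hw1, key _ _ _ (half_pos hpos) (by rw [dist_comm, hw2])⟩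

lemma hausdorffDist_ball {X : Type*} [MetricSpace X] (hshoot : ∀ x : X, ShootingAt x)
    (htan : TangencyProperty X) (x y : X) {t s : ℝ} (ht : 0 ≤ t) (hs : 0 ≤ s) :
    Metric.hausdorffDist (Metric.closedBall x t) (Metric.closedBall y s)
      = dist x y + |t - s| := by
  have upper : ∀ (x y : X) (t s : ℝ), 0 ≤ s → ∀ z ∈ Metric.closedBall x t,
      ∃ w ∈ Metric.closedBall y s, dist z w ≤ dist x y + |t - s| := by
    intro x y t s hs z hz
    rw [Metric.mem_closedBall] at hz
    by_cases hzs : dist z y ≤ s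
    · exact ⟨z, hzs, by rw [dist_self]; positivity⟩
    · push Not at hzs
      obtain ⟨w, hw1, hw2⟩ := exists_geodesic_point hshoot y z hs (by rw [dist_comm]; exact hzs.le)
      refine ⟨w, by rw [Metric.mem_closedBall, dist_comm, hw1], ?_⟩
      rw [dist_comm, hw2, dist_comm]
      linarith [dist_triangle z x y, le_abs_self (t - s)]
  have lower : ∀ (x y : X) (t s : ℝ), 0 ≤ s → s ≤ t →
      dist x y + |t - s| ≤ Metric.hausdorffDist (Metric.closedBall x t) (Metric.closedBall y s) := by
    intro x y t s hs hst
    have hp : ∃ p, dist x p = t ∧ dist y p = dist x y + t := by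
      by_cases hxy : y = x
      · -- For concentric balls, any other point serves as the start of the geodesic.
        obtain ⟨q, hq⟩ := exists_ne_of_tangency htan x
        obtain ⟨p, hp, -⟩ := exists_extension hshoot hq (hs.trans hst)
        exact ⟨p, hp, by rw [hxy, hp, dist_self, zero_add]⟩
      · exact exists_extension hshoot hxy (hs.trans hst)
    obtain ⟨p, hp1, hp2⟩ := hp
    have hne : (Metric.closedBall y s).Nonempty := ⟨y, by simpa using hs⟩
    have hpm : p ∈ Metric.closedBall x t := by rw [Metric.mem_closedBall, dist_comm, hp1]
    refine le_trans ?_ (Metric.infDist_le_hausdorffDist_of_mem hpm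
      (Metric.hausdorffEDist_ne_top_of_nonempty_of_bounded ⟨p, hpm⟩ hne
        Metric.isBounded_closedBall Metric.isBounded_closedBall))
    rw [Metric.le_infDist hne]
    intro w hw
    rw [Metric.mem_closedBall] at hw
    rw [abs_of_nonneg (by linarith)]
    linarith [dist_triangle y w p, dist_comm w y, dist_comm w p]
  apply le_antisymm
  · refine Metric.hausdorffDist_le_of_mem_dist (by positivity) (upper x y t s hs) ?_
    intro z hz
    have := upper y x s t ht z hz
    rwa [dist_comm y x, abs_sub_comm] at this
  · rcases le_total s t with h | h
    · exact lower x y t s hs h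
    · rw [dist_comm, abs_sub_comm, Metric.hausdorffDist_comm]
      exact lower y x s t ht h

/-- The points `A` and `B` have at most one midpoint with respect to the function `D`. -/
def UniqueMid {S : Type*} (D : S → S → ℝ) (A B : S) : Prop :=
  ∀ M N : S, D A M = D A B / 2 → D M B = D A B / 2 →
    D A N = D A B / 2 → D N B = D A B / 2 → M = N

/-- A presentation of `S` as `X × [0,∞)` with the `ℓ¹` product of the metrics: `c` and `r` are the
coordinate functions and `D` is the distance on `S`. -/
structure L1Coords {X S : Type*} [MetricSpace X] (c : S → X) (r : S → ℝ) (D : S → S → ℝ) :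
    Prop where
  nonneg : ∀ A, 0 ≤ r A
  surj : ∀ (x : X) (t : ℝ), 0 ≤ t → ∃ A, c A = x ∧ r A = t
  inj : ∀ A B, c A = c B → r A = r B → A = B
  dist_eq : ∀ A B, D A B = dist (c A) (c B) + |r A - r B|

lemma uniqueMid_iff {X S : Type*} [MetricSpace X] {c : S → X} {r : S → ℝ} {D : S → S → ℝ}
    (hshoot : ∀ x : X, ShootingAt x) (htan : TangencyProperty X) (hS : L1Coords c r D)
    (A B : S) : UniqueMid D A B ↔ c A = c B ∨ r A = r B := by
  constructor
  · intro hU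
    by_contra! hne
    obtain ⟨hc, hr⟩ := hne
    have hd : 0 < dist (c A) (c B) := dist_pos.2 hc
    have he : 0 < |r A - r B| := abs_pos.2 (sub_ne_zero.2 hr)
    have hA := hS.nonneg A
    have hB := hS.nonneg B
    -- Splitting `D A B / 2 = a + b` into a horizontal part `a` and a vertical part `b` gives a
    -- midpoint for each admissible choice of `a` and `b`.
    have mid : ∀ a b : ℝ, 0 ≤ a → 0 ≤ b → a ≤ dist (c A) (c B) → b ≤ |r A - r B| →
        a + b = D A B / 2 →
        ∃ M, D A M = D A B / 2 ∧ D M B = D A B / 2 ∧ |r A - r M| = b := by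
      intro a b ha hb had hbe hab
      obtain ⟨z, hz1, hz2⟩ := exists_geodesic_point hshoot (c A) (c B) ha had
      obtain ⟨u, hu0, hu1, hu2⟩ : ∃ u : ℝ, 0 ≤ u ∧ |r A - u| = b ∧
          |u - r B| = |r A - r B| - b := by
        rcases le_total (r A) (r B) with h | h
        · rw [abs_of_nonpos (by linarith)] at hbe ⊢
          refine ⟨r A + b, by linarith, ?_, ?_⟩
          · rw [abs_of_nonpos (by linarith)]; ring
          · rw [abs_of_nonpos (by linarith)]; ring
        · rw [abs_of_nonneg (by linarith)] at hbe ⊢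
          refine ⟨r A - b, by linarith, ?_, ?_⟩
          · rw [abs_of_nonneg (by linarith)]; ring
          · rw [abs_of_nonneg (by linarith)]; ring
      obtain ⟨M, hM1, hM2⟩ := hS.surj z u hu0
      have hAB := hS.dist_eq A B
      refine ⟨M, ?_, ?_, by rw [hM2, hu1]⟩
      · rw [hS.dist_eq A M, hM1, hM2, hz1, hu1, hab]
      · rw [hS.dist_eq M B, hM1, hM2, hz2, hu2]; linarith
    have hAB := hS.dist_eq A B
    obtain ⟨ε, hε, hε1, hε2⟩ : ∃ ε : ℝ, 0 < ε ∧ ε ≤ dist (c A) (c B) / 2 ∧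
        ε ≤ |r A - r B| / 2 :=
      ⟨min (dist (c A) (c B) / 2) (|r A - r B| / 2), lt_min (by linarith) (by linarith),
        min_le_left _ _, min_le_right _ _⟩
    obtain ⟨M, hM1, hM2, hM3⟩ := mid (dist (c A) (c B) / 2) (|r A - r B| / 2)
      (by linarith) (by linarith) (by linarith) (by linarith) (by linarith)
    obtain ⟨N, hN1, hN2, hN3⟩ := mid (dist (c A) (c B) / 2 + ε) (|r A - r B| / 2 - ε)
      (by linarith) (by linarith) (by linarith) (by linarith) (by linarith)
    have := hU M N hM1 hM2 hN1 hN2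
    rw [this] at hM3
    linarith
  · rintro (h | h)
    · have key : ∀ M, D A M = D A B / 2 → D M B = D A B / 2 →
          c M = c A ∧ r M = (r A + r B) / 2 := by
        intro M h1 h2
        rw [hS.dist_eq A M, hS.dist_eq A B, ← h, dist_self] at h1
        rw [hS.dist_eq M B, hS.dist_eq A B, ← h, dist_self] at h2
        have hz : dist (c A) (c M) = 0 := by
          linarith [abs_sub_le (r A) (r M) (r B), dist_comm (c A) (c M),
            dist_nonneg (x := c A) (y := c M)]
        refine ⟨(dist_eq_zero.1 hz).symm, ?_⟩
        rw [dist_comm] at h2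
        rw [hz] at h1 h2
        grind
      intro M N hM1 hM2 hN1 hN2
      obtain ⟨a1, a2⟩ := key M hM1 hM2
      obtain ⟨b1, b2⟩ := key N hN1 hN2
      exact hS.inj _ _ (a1.trans b1.symm) (a2.trans b2.symm)
    · have key : ∀ M, D A M = D A B / 2 → D M B = D A B / 2 →
          r M = r A ∧ dist (c A) (c M) = dist (c A) (c B) / 2 ∧
            dist (c M) (c B) = dist (c A) (c B) / 2 := by
        intro M h1 h2
        rw [hS.dist_eq A M, hS.dist_eq A B, ← h, sub_self, abs_zero] at h1
        rw [hS.dist_eq M B, hS.dist_eq A B, ← h, sub_self, abs_zero] at h2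
        have hz : |r A - r M| = 0 := by
          linarith [dist_triangle (c A) (c M) (c B), abs_sub_comm (r A) (r M),
            abs_nonneg (r A - r M)]
        rw [abs_sub_comm (r M), hz] at h2
        rw [hz] at h1
        exact ⟨(sub_eq_zero.1 (abs_eq_zero.1 hz)).symm, by linarith, by linarith⟩
      intro M N hM1 hM2 hN1 hN2
      obtain ⟨a1, a2, a3⟩ := key M hM1 hM2
      obtain ⟨b1, b2, b3⟩ := key N hN1 hN2
      exact hS.inj _ _ (metric_midpoint_unique hshoot htan a2 a3 b2 b3) (a1.trans b1.symm)

lemma radius_preserved {X S : Type*} [MetricSpace X] {c : S → X} {r : S → ℝ} {D : S → S → ℝ}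
    (hshoot : ∀ x : X, ShootingAt x) (htan : TangencyProperty X) (hS : L1Coords c r D)
    (F : S ≃ S) (hF : ∀ A B, D (F A) (F B) = D A B) {P Q : S} (hPQ : r P = r Q) :
    r (F P) = r (F Q) := by
  have rel : ∀ A B, (c (F A) = c (F B) ∨ r (F A) = r (F B)) ↔ (c A = c B ∨ r A = r B) := by
    intro A B
    rw [← uniqueMid_iff hshoot htan hS, ← uniqueMid_iff hshoot htan hS]
    simp only [UniqueMid]
    rw [F.surjective.forall₂]
    simp only [hF, F.injective.eq_iff]
  by_contra hr
  have hc : c (F P) = c (F Q) := ((rel P Q).2 (Or.inr hPQ)).resolve_right hr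
  have hcPQ : c P ≠ c Q := fun h => hr (by rw [hS.inj P Q h hPQ])
  have fib : ∀ Z, r Z = r P → c (F Z) = c (F P) := by
    intro Z hZ
    rcases (rel Z P).2 (Or.inr hZ) with h | h
    · exact h
    · rcases (rel Z Q).2 (Or.inr (hZ.trans hPQ)) with h' | h'
      · rw [h', hc]
      · exact absurd (h.symm.trans h') hr
  -- `W` is the preimage of the endpoint of the fibre; it lies in the slice of `P` and `Q`.
  obtain ⟨V, hV1, hV2⟩ := hS.surj (c (F P)) 0 le_rfl
  obtain ⟨W, rfl⟩ := F.surjective V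
  have hW : r W = r P := by
    rcases (rel W P).1 (Or.inl hV1) with h | h
    · rcases (rel W Q).1 (Or.inl (hV1.trans hc)) with h' | h'
      · exact absurd (h.symm.trans h') hcPQ
      · rw [h', hPQ]
    · exact h
  -- In the slice, `W` lies strictly between two points `Y` and `Z`.
  obtain ⟨y, hy⟩ := exists_ne_of_tangency htan (c W)
  obtain ⟨p, hp1, hp2⟩ := exists_extension hshoot hy zero_le_one
  obtain ⟨Y, hY1, hY2⟩ := hS.surj y (r P) (hS.nonneg P)
  obtain ⟨Z, hZ1, hZ2⟩ := hS.surj p (r P) (hS.nonneg P)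
  have e1 := hF W Y
  have e2 := hF W Z
  have e3 := hF Y Z
  simp only [hS.dist_eq, fib Y hY2, fib Z hZ2, fib W hW, hY1, hZ1, hY2, hZ2, hW, hV2, hp1, hp2,
    dist_self, sub_self, abs_zero, zero_add, add_zero, zero_sub, abs_neg] at e1 e2 e3
  have hpos : 0 < dist (c W) y := dist_pos.2 hy.symm
  rw [abs_of_nonneg (hS.nonneg _)] at e1 e2
  rw [e1, e2] at e3
  rcases abs_cases (dist (c W) y - 1) with h | h <;> linarith

/-- Let `X` be a complete and locally compact length space satisfying the shooting and tangency
properties. Then every isometry `F` of `(Σ(X), d_H)` maps each slice `Σ_t` onto some slice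
`Σ_r`, and it gives rise to a surjective isometry `f : X → X` with `F({x}) = B̄_R(f(x))` for a
fixed `R ≥ 0`. -/
theorem isometry_of_ball_space_induces_isometry
    {X : Type*} [MetricSpace X] [CompleteSpace X] [LocallyCompactSpace X]
    (hX : IsLengthSpace X) (hshoot : ∀ x : X, ShootingAt x) (htan : TangencyProperty X)
    (F : {A : Set X // IsBall A} → {A : Set X // IsBall A})
    (hbij : Function.Bijective F)
    (hiso : ∀ A B : {A : Set X // IsBall A},
      Metric.hausdorffDist (F A).1 (F B).1 = Metric.hausdorffDist A.1 B.1) :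
    (∀ t : ℝ, 0 ≤ t → ∃ r : ℝ, 0 ≤ r ∧
      F '' {A : {A : Set X // IsBall A} | ∃ x : X, A.1 = Metric.closedBall x t}
        = {A : {A : Set X // IsBall A} | ∃ x : X, A.1 = Metric.closedBall x r}) ∧
    ∃ (R : ℝ) (f : X → X), 0 ≤ R ∧ Isometry f ∧ Function.Surjective f ∧
      ∀ x : X, (F ⟨Metric.closedBall x 0, x, 0, le_rfl, rfl⟩).1
        = Metric.closedBall (f x) R := by
  classical
  choose c r hr hcr using fun A : {A : Set X // IsBall A} => A.2
  have hS : L1Coords c r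
      (fun A B : {A : Set X // IsBall A} => Metric.hausdorffDist A.1 B.1) := by
    refine ⟨hr, ?_, ?_, ?_⟩
    · intro x t ht
      let A : {A : Set X // IsBall A} := ⟨Metric.closedBall x t, x, t, ht, rfl⟩
      have h := hausdorffDist_ball hshoot htan x (c A) ht (hr A)
      rw [← hcr A, Metric.hausdorffDist_self_zero] at h
      have h1 := dist_nonneg (x := x) (y := c A)
      have h2 := abs_nonneg (t - r A)
      exact ⟨A, (dist_eq_zero.1 (by linarith)).symm,
        (sub_eq_zero.1 (abs_eq_zero.1 (by linarith))).symm⟩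
    · intro A B h1 h2
      exact Subtype.ext (by rw [hcr A, hcr B, h1, h2])
    · intro A B
      have h := hausdorffDist_ball hshoot htan (c A) (c B) (hr A) (hr B)
      rwa [← hcr A, ← hcr B] at h
  let E := Equiv.ofBijective F hbij
  have hE : ∀ A B, r A = r B → r (F A) = r (F B) := fun A B h =>
    radius_preserved hshoot htan hS E hiso h
  have hE' : ∀ A B, r (F A) = r (F B) → r A = r B := by
    intro A B h
    have := radius_preserved hshoot htan hS E.symm
      (fun A B => by rw [← hiso]; simp [E, Equiv.ofBijective_apply_symm_apply]) h
    simpa [E] using this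
  -- The slice `Σ_t` consists of the balls with `r`-coordinate `t`.
  have slice : ∀ t : ℝ, 0 ≤ t → ∀ A : {A : Set X // IsBall A},
      (∃ x : X, A.1 = Metric.closedBall x t) ↔ r A = t := by
    intro t ht A
    constructor
    · rintro ⟨x, hx⟩
      obtain ⟨B, hB1, hB2⟩ := hS.surj x t ht
      have : A = B := Subtype.ext (by rw [hx, hcr B, hB1, hB2])
      rw [this, hB2]
    · intro h
      exact ⟨c A, by rw [← h]; exact hcr A⟩
  rcases isEmpty_or_nonempty X with hemp | ⟨⟨x₀⟩⟩
  · refine ⟨fun t ht => ⟨t, ht, ?_⟩, 0, id, le_rfl, isometry_id, Function.surjective_id,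
      fun x => (hemp.false x).elim⟩
    ext A
    exact (hemp.false (c A)).elim
  refine ⟨?_, ?_⟩
  · intro t ht
    obtain ⟨A₀, -, hA₀⟩ := hS.surj x₀ t ht
    refine ⟨r (F A₀), hr _, ?_⟩
    ext B
    simp only [Set.mem_image, Set.mem_ofPred_eq, slice t ht, slice _ (hr (F A₀))]
    constructor
    · rintro ⟨A, hA, rfl⟩
      exact hE _ _ (hA.trans hA₀.symm)
    · intro hB
      obtain ⟨A, rfl⟩ := hbij.2 B
      exact ⟨A, (hE' _ _ hB).trans hA₀, rfl⟩
  · let pt : X → {A : Set X // IsBall A} :=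
      fun x => ⟨Metric.closedBall x 0, x, 0, le_rfl, rfl⟩
    have hpt : ∀ x, r (pt x) = 0 := fun x => (slice 0 le_rfl _).1 ⟨x, rfl⟩
    have hcp : ∀ x, c (pt x) = x := by
      intro x
      have h := hcr (pt x)
      rw [hpt, Metric.closedBall_zero] at h
      have h' : (pt x).1 = {x} := Metric.closedBall_zero
      exact (Set.singleton_injective (h'.symm.trans h)).symm
    have hR : ∀ x, r (F (pt x)) = r (F (pt x₀)) := fun x =>
      hE _ _ ((hpt x).trans (hpt x₀).symm)
    refine ⟨r (F (pt x₀)), fun x => c (F (pt x)), hr _, ?_, ?_, ?_⟩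
    · refine Isometry.of_dist_eq fun x y => ?_
      have h := hiso (pt x) (pt y)
      have h1 := hS.dist_eq (F (pt x)) (F (pt y))
      have h2 := hS.dist_eq (pt x) (pt y)
      simp only [hR x, hR y, hpt, hcp, sub_self, abs_zero, add_zero] at h1 h2
      rw [← h1, h, h2]
    · intro y
      obtain ⟨B, hB1, hB2⟩ := hS.surj y (r (F (pt x₀))) (hr _)
      obtain ⟨A, rfl⟩ := hbij.2 B
      have hA : r A = 0 := (hE' _ _ hB2).trans (hpt x₀)
      refine ⟨c A, ?_⟩
      have : pt (c A) = A := hS.inj _ _ (hcp _) ((hpt _).trans hA.symm)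
      simp only [this, hB1]
    · intro x
      rw [← hR x]
      exact hcr (F (pt x))
end

section
/- Let (X,d) be a complete and locally compact length space satisfying the shooting property, let p, q ∈ X, let r, s ≥ 0, and let z ∈ X be a midpoint of p and q, i.e., d(p,z) = d(q,z) = d(p,q)/2. Then the ball B̄_{(r+s)/2}(z) is a midpoint of B̄_r(p) and B̄_s(q) in (Σ(X), d_H): d_H(B̄_r(p), B̄_{(r+s)/2}(z)) = d_H(B̄_s(q), B̄_{(r+s)/2}(z)) = d_H(B̄_r(p), B̄_s(q))/2. -/
/-- The distance from `x` to `B̄_s(q)` is at most `max 0 (d(q, x) - s)`: take `x` itself if it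
lies in the ball, and otherwise the point at distance `s` from `q` on a geodesic from `q` to `x`. -/
lemma exists_mem_closedBall_dist_le {X : Type*} [MetricSpace X]
    (hshoot : ∀ x : X, ShootingAt x) (q x : X) {s : ℝ} (hs : 0 ≤ s) :
    ∃ y ∈ Metric.closedBall q s, dist x y ≤ max 0 (dist q x - s) := by
  by_cases h : dist q x ≤ s
  · exact ⟨x, by rwa [Metric.mem_closedBall, dist_comm], by simp⟩
  push Not at h
  have hne : q ≠ x := by
    rintro rfl
    rw [dist_self] at h
    linarith
  obtain ⟨-, -, γ, h0, h1, -, hγ⟩ := hshoot x 1 one_pos q hne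
  rw [dist_comm x q] at h1 hγ
  have hs' : s ∈ Set.Icc (0 : ℝ) (dist q x + 1) := ⟨hs, by linarith⟩
  have h0' : (0 : ℝ) ∈ Set.Icc (0 : ℝ) (dist q x + 1) := ⟨le_rfl, by linarith⟩
  have hd' : dist q x ∈ Set.Icc (0 : ℝ) (dist q x + 1) := ⟨dist_nonneg, by linarith⟩
  refine ⟨γ s, ?_, ?_⟩
  · have := hγ s hs' 0 h0'
    rw [h0, sub_zero, abs_of_nonneg hs] at this
    exact this.le
  · have := hγ _ hd' s hs'
    rw [h1, abs_of_pos (by linarith)] at this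
    exact this.le.trans (le_max_right _ _)

/-- For `q = p` one shoots through `p` from an arbitrary other point, whence the nontriviality. -/
lemma exists_dist_eq_add {X : Type*} [MetricSpace X] [Nontrivial X]
    (hshoot : ∀ x : X, ShootingAt x) (p q : X) {r : ℝ} (hr : 0 ≤ r) :
    ∃ w : X, dist p w = r ∧ dist q w = dist p q + r := by
  rcases hr.eq_or_lt with rfl | hr
  · exact ⟨p, by simp, by simp [dist_comm]⟩
  have key : ∀ y : X, y ≠ p → ∃ w : X, dist p w = r ∧ dist y w = dist p y + r := by
    intro y hy
    obtain ⟨w, -, γ, h0, h1, h2, hγ⟩ := hshoot p r hr y hy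
    have hd : 0 ≤ dist p y := dist_nonneg
    have hw : dist p y + r ∈ Set.Icc (0 : ℝ) (dist p y + r) := ⟨by linarith, le_rfl⟩
    refine ⟨w, ?_, ?_⟩
    · have := hγ (dist p y) ⟨hd, by linarith⟩ _ hw
      rw [h1, h2] at this
      rw [this, abs_sub_comm, abs_of_nonneg (by linarith)]
      ring
    · have := hγ 0 ⟨le_rfl, by linarith⟩ _ hw
      rw [h0, h2] at this
      rw [this, abs_sub_comm, abs_of_nonneg (by linarith)]
      ring
  by_cases hq : q = p
  · subst hq
    obtain ⟨y, hy⟩ := exists_ne q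
    obtain ⟨w, hw, -⟩ := key y hy
    exact ⟨w, hw, by simp [hw]⟩
  · exact key q hq

lemma hausdorffDist_closedBall_of_le {X : Type*} [MetricSpace X] [Nontrivial X]
    (hshoot : ∀ x : X, ShootingAt x) (p q : X) {r s : ℝ} (hs : 0 ≤ s) (hsr : s ≤ r) :
    Metric.hausdorffDist (Metric.closedBall p r) (Metric.closedBall q s)
      = dist p q + (r - s) := by
  have hr : 0 ≤ r := hs.trans hsr
  have hd : 0 ≤ dist p q := dist_nonneg
  apply le_antisymm
  · refine Metric.hausdorffDist_le_of_mem_dist (by linarith) ?_ ?_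
    · intro x hx
      obtain ⟨y, hy, hxy⟩ := exists_mem_closedBall_dist_le hshoot q x hs
      refine ⟨y, hy, hxy.trans (max_le (by linarith) ?_)⟩
      have := dist_triangle q p x
      rw [Metric.mem_closedBall, dist_comm] at hx
      rw [dist_comm q p] at this
      linarith
    · intro x hx
      obtain ⟨y, hy, hxy⟩ := exists_mem_closedBall_dist_le hshoot p x hr
      refine ⟨y, hy, hxy.trans (max_le (by linarith) ?_)⟩
      have := dist_triangle p q x
      rw [Metric.mem_closedBall, dist_comm] at hx
      linarith
  · obtain ⟨w, hpw, hqw⟩ := exists_dist_eq_add hshoot p q hr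
    have hne : (Metric.closedBall q s).Nonempty := Metric.nonempty_closedBall.2 hs
    have hw : w ∈ Metric.closedBall p r := by rw [Metric.mem_closedBall, dist_comm, hpw]
    refine le_trans ?_ (Metric.infDist_le_hausdorffDist_of_mem hw
      (Metric.hausdorffEDist_ne_top_of_nonempty_of_bounded ⟨w, hw⟩ hne
        Metric.isBounded_closedBall Metric.isBounded_closedBall))
    rw [Metric.le_infDist hne]
    intro y hy
    rw [Metric.mem_closedBall, dist_comm] at hy
    have := dist_triangle q y w
    rw [dist_comm y w] at this
    linarith

lemma hausdorffDist_closedBall {X : Type*} [MetricSpace X] [Nontrivial X]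
    (hshoot : ∀ x : X, ShootingAt x) (p q : X) {r s : ℝ} (hr : 0 ≤ r) (hs : 0 ≤ s) :
    Metric.hausdorffDist (Metric.closedBall p r) (Metric.closedBall q s)
      = dist p q + |r - s| := by
  rcases le_total s r with h | h
  · rw [hausdorffDist_closedBall_of_le hshoot p q hs h, abs_of_nonneg (by linarith)]
  · rw [Metric.hausdorffDist_comm, hausdorffDist_closedBall_of_le hshoot q p hr h,
      abs_sub_comm, abs_of_nonneg (by linarith), dist_comm]

/-- In a complete and locally compact length space satisfying the shooting property, if `z` is
a midpoint of `p` and `q`, then the ball `B̄_{(r+s)/2}(z)` is a midpoint of `B̄_r(p)` and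
`B̄_s(q)` with respect to the Hausdorff distance. -/
theorem ball_midpoint_of_shooting
    {X : Type*} [MetricSpace X] [CompleteSpace X] [LocallyCompactSpace X]
    (hX : IsLengthSpace X) (hshoot : ∀ x : X, ShootingAt x)
    (p q z : X) {r s : ℝ} (hr : 0 ≤ r) (hs : 0 ≤ s)
    (hzp : dist p z = dist p q / 2) (hzq : dist q z = dist p q / 2) :
    Metric.hausdorffDist (Metric.closedBall p r) (Metric.closedBall z ((r + s) / 2))
        = Metric.hausdorffDist (Metric.closedBall p r) (Metric.closedBall q s) / 2 ∧
    Metric.hausdorffDist (Metric.closedBall q s) (Metric.closedBall z ((r + s) / 2))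
        = Metric.hausdorffDist (Metric.closedBall p r) (Metric.closedBall q s) / 2 := by
  have ht : 0 ≤ (r + s) / 2 := by linarith
  rcases subsingleton_or_nontrivial X with hsub | hnt
  · have huniv : ∀ (x : X) {t : ℝ}, 0 ≤ t → Metric.closedBall x t = Set.univ :=
      fun x t h => Subsingleton.eq_univ_of_nonempty (Metric.nonempty_closedBall.2 h)
    simp [huniv p hr, huniv q hs, huniv z ht]
  · rw [hausdorffDist_closedBall hshoot p z hr ht, hausdorffDist_closedBall hshoot q z hs ht,
      hausdorffDist_closedBall hshoot p q hr hs, hzp, hzq]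
    have h1 : r - (r + s) / 2 = (r - s) / 2 := by ring
    have h2 : s - (r + s) / 2 = -((r - s) / 2) := by ring
    rw [h1, h2, abs_neg, abs_div, abs_two, ← add_div]
    exact ⟨rfl, rfl⟩
end

section
/- Let d_n be a sequence of complete, locally compact length metrics on a set X converging uniformly to a complete, locally compact length metric d. Then for every x, y ∈ X and t, s ≥ 0, the Hausdorff distance of closed balls converges: d_H(B̄_t(x), B̄_s(y)) = lim_{n→∞} dⁿ_H(B̄ⁿ_t(x), B̄ⁿ_s(y)), where d_H is the Hausdorff distance induced by d and dⁿ_H the one induced by d_n, and B̄_t(x), B̄ⁿ_t(x) are the closed balls for d and d_n respectively. -/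
/-!
In a length metric, the closed `(t + ε)`-ball about `x` lies within any distance larger than `ε`
of the closed `t`-ball about `x`: cut an almost shortest path from `x` at the moment it reaches
distance `t` (`exists_mem_mball_near`). Hence, if two length metrics differ by at most `ε`
everywhere, their closed balls with the same center and radius are `2ε`-close to one another,
uniformly in the center and the radius. Transporting points through these balls shows that the
Hausdorff distances of two balls computed in the two metrics differ by at most `6ε`
(`mhaus_mball_le`), and uniform convergence gives the limit. The argument uses approximate
nearest points only; balls are nonempty and bounded, so the Hausdorff distances are finite.
-/

/-- The distance function of a bundled metric `m` on the set `X`. -/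
def mdist {X : Type*} (m : MetricSpace X) (a b : X) : ℝ :=
  letI := m; dist a b

/-- The closed ball of center `x` and radius `r` for a bundled metric `m` on the set `X`. -/
def mball {X : Type*} (m : MetricSpace X) (x : X) (r : ℝ) : Set X :=
  letI := m; Metric.closedBall x r

/-- The Hausdorff distance between subsets of `X` induced by a bundled metric `m`. -/
noncomputable def mhaus {X : Type*} (m : MetricSpace X) (A B : Set X) : ℝ :=
  letI := m; Metric.hausdorffDist A B

/-- A bundled metric `m` on `X` is a *length metric* if the distance between any two points
equals the infimum of the lengths of continuous paths joining them. -/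
def IsLengthMetric {X : Type*} (m : MetricSpace X) : Prop :=
  letI := m
  ∀ x y : X, edist x y = ⨅ γ : Path x y, eVariationOn (fun t => γ t) Set.univ

/-- A bundled metric is complete. -/
def MComplete {X : Type*} (m : MetricSpace X) : Prop :=
  letI := m; CompleteSpace X

/-- A bundled metric is locally compact. -/
def MLocallyCompact {X : Type*} (m : MetricSpace X) : Prop :=
  letI := m; LocallyCompactSpace X

/-- The point `x` satisfies the *shooting property* for the bundled metric `m`: for every
`r > 0` and `y ≠ x` there are a point `p` in the boundary of the closed ball of radius `r`
about `x` and a geodesic segment `γ : [0, d(x,y)+r] → X` parameterized by arc length with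
`γ(0) = y`, `γ(d(x,y)) = x` and `γ(d(x,y)+r) = p`. -/
def MShootingAt {X : Type*} (m : MetricSpace X) (x : X) : Prop :=
  letI := m
  ∀ r : ℝ, 0 < r → ∀ y : X, y ≠ x →
    ∃ p ∈ frontier (Metric.closedBall x r), ∃ γ : ℝ → X,
      γ 0 = y ∧ γ (dist x y) = x ∧ γ (dist x y + r) = p ∧
      ∀ u ∈ Set.Icc (0:ℝ) (dist x y + r), ∀ v ∈ Set.Icc (0:ℝ) (dist x y + r),
        dist (γ u) (γ v) = |u - v|

section Aux

variable {X : Type*}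

lemma mdist_triangle (m : MetricSpace X) (a b c : X) :
    mdist m a c ≤ mdist m a b + mdist m b c :=
  @dist_triangle X m.toPseudoMetricSpace a b c

lemma mem_mball (m : MetricSpace X) (x z : X) (r : ℝ) : z ∈ mball m x r ↔ mdist m z x ≤ r :=
  Iff.rfl

/-- In a length metric, a point at distance at most `t + ε` from `x` is within `ε + δ` of the
closed ball of radius `t` about `x`, for every `δ > 0`. -/
lemma exists_mem_mball_near (m : MetricSpace X) (hm : IsLengthMetric m) {x z : X}
    {t ε δ : ℝ} (ht : 0 ≤ t) (hε : 0 ≤ ε) (hδ : 0 < δ) (hz : mdist m z x ≤ t + ε) :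
    ∃ w ∈ mball m x t, mdist m z w ≤ ε + δ := by
  let _ := m
  change dist z x ≤ t + ε at hz
  change ∃ w ∈ Metric.closedBall x t, dist z w ≤ ε + δ
  by_cases hzt : dist z x ≤ t
  · exact ⟨z, hzt, by rw [dist_self]; linarith⟩
  push Not at hzt
  have hlen : (⨅ γ : Path x z, eVariationOn (fun t => γ t) Set.univ)
      < ENNReal.ofReal (dist x z + δ) := by
    rw [← hm x z, edist_dist]
    exact (ENNReal.ofReal_lt_ofReal_iff (by positivity)).2 (by linarith)
  obtain ⟨γ, hγ⟩ := iInf_lt_iff.1 hlen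
  obtain ⟨u, -, hu⟩ : t ∈ Set.image (fun v : unitInterval => dist (γ v) x) Set.univ := by
    refine isPreconnected_univ.intermediate_value (Set.mem_univ 0) (Set.mem_univ 1)
      (f := fun v : unitInterval => dist (γ v) x) (by fun_prop) ?_
    simpa using ⟨ht, hzt.le⟩
  refine ⟨γ u, hu.le, ?_⟩
  have hsum : edist x (γ u) + edist (γ u) z ≤ eVariationOn (fun t => γ t) Set.univ := by
    calc edist x (γ u) + edist (γ u) z
        ≤ eVariationOn (fun t => γ t) (Set.Iic u) + eVariationOn (fun t => γ t) (Set.Ici u) := by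
          gcongr
          · simpa using eVariationOn.edist_le (fun t => γ t) (s := Set.Iic u)
              (x := 0) (y := u) (Set.mem_Iic.2 u.2.1) (Set.mem_Iic.2 le_rfl)
          · simpa using eVariationOn.edist_le (fun t => γ t) (s := Set.Ici u)
              (x := u) (y := 1) (Set.mem_Ici.2 le_rfl) (Set.mem_Ici.2 u.2.2)
      _ ≤ eVariationOn (fun t => γ t) (Set.Iic u ∪ Set.Ici u) :=
          eVariationOn.add_le_union _ fun a ha b hb => le_trans ha hb
      _ ≤ eVariationOn (fun t => γ t) Set.univ := eVariationOn.mono _ (Set.subset_univ _)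
  have hlt := hsum.trans_lt hγ
  rw [edist_dist, edist_dist, ← ENNReal.ofReal_add dist_nonneg dist_nonneg,
    ENNReal.ofReal_lt_ofReal_iff (by positivity)] at hlt
  simp only at hu
  rw [dist_comm x, dist_comm _ z, dist_comm x z, hu] at hlt
  linarith

/-- Any point of one ball has a point of the other ball within `mhaus + η`. -/
lemma exists_mdist_le_mhaus_add (m : MetricSpace X) {x y w : X} {t s η : ℝ}
    (ht : 0 ≤ t) (hs : 0 ≤ s) (hη : 0 < η) (hw : w ∈ mball m x t) :
    ∃ v ∈ mball m y s, mdist m w v ≤ mhaus m (mball m x t) (mball m y s) + η := by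
  let _ := m
  have hfin : Metric.hausdorffEDist (Metric.closedBall x t) (Metric.closedBall y s) ≠ ⊤ :=
    Metric.hausdorffEDist_ne_top_of_nonempty_of_bounded
      ⟨x, Metric.mem_closedBall_self ht⟩ ⟨y, Metric.mem_closedBall_self hs⟩
      Metric.isBounded_closedBall Metric.isBounded_closedBall
  obtain ⟨v, hv, hlt⟩ := Metric.exists_dist_lt_of_hausdorffDist_lt hw
    (lt_add_of_pos_right (Metric.hausdorffDist (Metric.closedBall x t) (Metric.closedBall y s)) hη)
    hfin
  exact ⟨v, hv, hlt.le⟩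

lemma mhaus_comm (m : MetricSpace X) (A B : Set X) : mhaus m A B = mhaus m B A :=
  @Metric.hausdorffDist_comm X m.toPseudoMetricSpace A B

lemma mhaus_nonneg (m : MetricSpace X) (A B : Set X) : 0 ≤ mhaus m A B :=
  @Metric.hausdorffDist_nonneg X m.toPseudoMetricSpace A B

/-- If two length metrics differ by at most `ε`, every point of an `m'`-ball is `m'`-close to a
second `m'`-ball, up to the `m`-Hausdorff distance of the corresponding `m`-balls and `6ε`. -/
lemma exists_mdist_le_of_close (m m' : MetricSpace X) (hm : IsLengthMetric m)
    (hm' : IsLengthMetric m') {ε : ℝ} (hε : 0 < ε)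
    (h : ∀ a b : X, |mdist m' a b - mdist m a b| ≤ ε)
    {x y z : X} {t s : ℝ} (ht : 0 ≤ t) (hs : 0 ≤ s) (hz : z ∈ mball m' x t) :
    ∃ v ∈ mball m' y s, mdist m' z v ≤ mhaus m (mball m x t) (mball m y s) + 6 * ε := by
  rw [mem_mball] at hz
  obtain ⟨w, hw, hzw⟩ := exists_mem_mball_near m hm (z := z) (x := x) (ε := ε) ht hε.le hε
    (by linarith [abs_le.1 (h z x)])
  obtain ⟨v, hv, hwv⟩ := exists_mdist_le_mhaus_add m (y := y) ht hs hε hw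
  rw [mem_mball] at hv
  obtain ⟨v', hv', hvv'⟩ := exists_mem_mball_near m' hm' (z := v) (x := y) (ε := ε) hs hε.le hε
    (by linarith [abs_le.1 (h v y)])
  refine ⟨v', hv', ?_⟩
  linarith [mdist_triangle m' z v v', abs_le.1 (h z v), mdist_triangle m z w v]

lemma mhaus_mball_le (m m' : MetricSpace X) (hm : IsLengthMetric m)
    (hm' : IsLengthMetric m') {ε : ℝ} (hε : 0 < ε)
    (h : ∀ a b : X, |mdist m' a b - mdist m a b| ≤ ε)
    (x y : X) {t s : ℝ} (ht : 0 ≤ t) (hs : 0 ≤ s) :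
    mhaus m' (mball m' x t) (mball m' y s)
      ≤ mhaus m (mball m x t) (mball m y s) + 6 * ε := by
  have h0 := mhaus_nonneg m (mball m x t) (mball m y s)
  refine @Metric.hausdorffDist_le_of_mem_dist X m'.toPseudoMetricSpace _ _ _ (by positivity)
    (fun z hz => exists_mdist_le_of_close m m' hm hm' hε h ht hs hz) (fun z hz => ?_)
  rw [mhaus_comm]
  exact exists_mdist_le_of_close m m' hm hm' hε h hs ht hz

end Aux

/-- If complete, locally compact length metrics `d_n` on `X` converge uniformly to a complete,
locally compact length metric `d`, then the Hausdorff distances of closed balls converge: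
`d_H(B̄_t(x), B̄_s(y)) = lim_n dⁿ_H(B̄ⁿ_t(x), B̄ⁿ_s(y))`. -/
theorem hausdorffDist_balls_of_uniform_convergence
    {X : Type*} (D : MetricSpace X) (Dn : ℕ → MetricSpace X)
    (hD : IsLengthMetric D) (hDc : MComplete D) (hDl : MLocallyCompact D)
    (hDn : ∀ n, IsLengthMetric (Dn n)) (hDnc : ∀ n, MComplete (Dn n))
    (hDnl : ∀ n, MLocallyCompact (Dn n))
    (hconv : ∀ ε : ℝ, 0 < ε → ∃ N : ℕ, ∀ n ≥ N, ∀ a b : X,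
      |mdist (Dn n) a b - mdist D a b| ≤ ε)
    (x y : X) {t s : ℝ} (ht : 0 ≤ t) (hs : 0 ≤ s) :
    Filter.Tendsto (fun n => mhaus (Dn n) (mball (Dn n) x t) (mball (Dn n) y s))
      Filter.atTop (nhds (mhaus D (mball D x t) (mball D y s))) := by
  rw [Metric.tendsto_atTop]
  intro ε hε
  obtain ⟨N, hN⟩ := hconv (ε / 7) (by positivity)
  refine ⟨N, fun n hn => ?_⟩
  have h1 := mhaus_mball_le D (Dn n) hD (hDn n) (by positivity) (hN n hn) x y ht hs
  have h2 := mhaus_mball_le (Dn n) D (hDn n) hD (ε := ε / 7) (by positivity)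
    (fun a b => by rw [abs_sub_comm]; exact hN n hn a b) x y ht hs
  rw [Real.dist_eq, abs_lt]
  constructor <;> linarith
end

section
/- Let d_n be a sequence of complete, locally compact length metrics on a set X converging uniformly to a complete, locally compact length metric d. If each (X, d_n) satisfies the shooting property, then (X, d) satisfies the shooting property. -/
open Filter Topology

/-- Hopf–Rinow–Cohn-Vossen: in a complete locally compact space where points at distance at most
`s + δ` from `x` can be moved into the ball of radius `s` at cost at most `2 * δ`, closed balls
about `x` are compact. -/
lemma isCompact_closedBall_of_approx {X : Type*} [MetricSpace X] [CompleteSpace X]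
    [LocallyCompactSpace X] (x : X)
    (h : ∀ s δ : ℝ, 0 ≤ s → 0 < δ → ∀ y : X, dist x y ≤ s + δ →
      ∃ z, dist x z ≤ s ∧ dist z y ≤ 2 * δ) (R : ℝ) :
    IsCompact (Metric.closedBall x R) := by
  set S : Set ℝ := {r | IsCompact (Metric.closedBall x r)} with hS
  have hdown : ∀ r ∈ S, ∀ s ≤ r, s ∈ S := fun r hr s hs =>
    IsCompact.of_isClosed_subset hr Metric.isClosed_closedBall (Metric.closedBall_subset_closedBall hs)
  have h0 : (0 : ℝ) ∈ S := by simp [hS]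
  suffices hb : ¬ BddAbove S by
    obtain ⟨r, hr, hRr⟩ := not_bddAbove_iff.1 hb R
    exact hdown r hr R hRr.le
  intro hb
  have hM0 : 0 ≤ sSup S := le_csSup hb h0
  have hlt : ∀ s < sSup S, s ∈ S := by
    intro s hs
    obtain ⟨r, hr, hsr⟩ := exists_lt_of_lt_csSup ⟨0, h0⟩ hs
    exact hdown r hr s hsr.le
  -- the supremum is attained: the ball of that radius is totally bounded
  have hMS : sSup S ∈ S := by
    refine isCompact_iff_totallyBounded_isComplete.2 ⟨?_, Metric.isClosed_closedBall.isComplete⟩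
    rw [Metric.totallyBounded_iff]
    intro ε hε
    have hs : max 0 (sSup S - ε / 4) ∈ S := by
      rcases le_total 0 (sSup S - ε / 4) with h' | h'
      · rw [max_eq_right h']; exact hlt _ (by linarith)
      · rw [max_eq_left h']; exact h0
    obtain ⟨t, htf, ht⟩ := Metric.totallyBounded_iff.1 (IsCompact.totallyBounded hs) (ε / 2) (by linarith)
    refine ⟨t, htf, fun y hy => ?_⟩
    rw [Metric.mem_closedBall, dist_comm] at hy
    obtain ⟨z, hz, hzy⟩ := h (max 0 (sSup S - ε / 4)) (ε / 4) (le_max_left _ _) (by linarith) y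
      (by linarith [le_max_right 0 (sSup S - ε / 4)])
    have hz' := ht (show z ∈ Metric.closedBall x _ by rwa [Metric.mem_closedBall, dist_comm])
    simp only [Set.mem_iUnion, Metric.mem_ball, exists_prop] at hz' ⊢
    obtain ⟨w, hw, hzw⟩ := hz'
    refine ⟨w, hw, ?_⟩
    have := dist_triangle y z w
    rw [dist_comm y z] at this
    linarith
  -- but a compact ball has a compact neighbourhood, which contains a larger ball
  obtain ⟨K, hK, hsub⟩ := exists_compact_superset (show IsCompact (Metric.closedBall x (sSup S)) from hMS)
  obtain ⟨δ, hδ, hδK⟩ := IsCompact.exists_cthickening_subset_open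
    (show IsCompact (Metric.closedBall x (sSup S)) from hMS) isOpen_interior hsub
  have hmem : sSup S + δ / 2 ∈ S := by
    refine IsCompact.of_isClosed_subset hK Metric.isClosed_closedBall fun y hy => ?_
    rw [Metric.mem_closedBall, dist_comm] at hy
    obtain ⟨z, hz, hzy⟩ := h (sSup S) (δ / 2) hM0 (by linarith) y hy
    refine interior_subset (hδK (Metric.mem_cthickening_of_dist_le y z δ _ ?_ ?_))
    · rwa [Metric.mem_closedBall, dist_comm]
    · rw [dist_comm]; linarith
  linarith [le_csSup hb hmem]

/-- A uniform limit of metrics `e n` joining any two points by a geodesic has approximate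
intermediate points. -/
lemma exists_approx_intermediate {X : Type*} [MetricSpace X] (e : ℕ → X → X → ℝ)
    (hconv : ∀ ε : ℝ, 0 < ε → ∃ N : ℕ, ∀ n ≥ N, ∀ a b : X, |e n a b - dist a b| ≤ ε)
    (hgeo : ∀ n x y r, 0 < r → y ≠ x → ∃ γ : ℝ → X, γ 0 = y ∧ γ (e n x y) = x ∧
      ∀ u ∈ Set.Icc (0 : ℝ) (e n x y + r), ∀ v ∈ Set.Icc (0 : ℝ) (e n x y + r),
        e n (γ u) (γ v) = |u - v|)
    (x : X) (s δ : ℝ) (hs : 0 ≤ s) (hδ : 0 < δ) (y : X) (hy : dist x y ≤ s + δ) :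
    ∃ z, dist x z ≤ s ∧ dist z y ≤ 2 * δ := by
  rcases le_or_gt (dist x y) s with h | h
  · exact ⟨y, h, by simpa using hδ.le⟩
  rcases hs.eq_or_lt with rfl | hs
  · exact ⟨x, by simp, by linarith⟩
  have hne : y ≠ x := by
    rintro rfl
    rw [dist_self] at h
    linarith
  obtain ⟨η, hη, hηs, hηδ⟩ : ∃ η : ℝ, 0 < η ∧ η ≤ s ∧ η ≤ δ / 3 :=
    ⟨min s (δ / 3), lt_min hs (by linarith), min_le_left _ _, min_le_right _ _⟩
  obtain ⟨N, hN⟩ := hconv η hη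
  have hc := hN N le_rfl
  obtain ⟨γ, hγ0, hγx, hγ⟩ := hgeo N x y 1 one_pos hne
  have hxy := abs_le.1 (hc x y)
  set L := e N x y
  -- the point at `e N`-distance `s - η` from `x`
  have h1 := hγ L ⟨by linarith, by linarith⟩ (L - (s - η)) ⟨by linarith, by linarith⟩
  have h2 := hγ (L - (s - η)) ⟨by linarith, by linarith⟩ 0 ⟨by linarith, by linarith⟩
  rw [hγx, abs_of_nonneg (by linarith)] at h1
  rw [hγ0, abs_of_nonneg (by linarith)] at h2
  have h3 := abs_le.1 (hc x (γ (L - (s - η))))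
  have h4 := abs_le.1 (hc (γ (L - (s - η))) y)
  exact ⟨γ (L - (s - η)), by linarith, by linarith⟩

/-- An ultralimit of `e n`-geodesics is a geodesic of the limit metric from `y` through `x`. It is
prolonged beyond `x` by `r + 1 / 2` rather than `r`, so that the point at distance `r` from `x` is
followed by points at distance greater than `r`. -/
lemma exists_limit_geodesic {X : Type*} [MetricSpace X] [CompleteSpace X]
    [LocallyCompactSpace X] (e : ℕ → X → X → ℝ)
    (hconv : ∀ ε : ℝ, 0 < ε → ∃ N : ℕ, ∀ n ≥ N, ∀ a b : X, |e n a b - dist a b| ≤ ε)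
    (hgeo : ∀ n x y r, 0 < r → y ≠ x → ∃ γ : ℝ → X, γ 0 = y ∧ γ (e n x y) = x ∧
      ∀ u ∈ Set.Icc (0 : ℝ) (e n x y + r), ∀ v ∈ Set.Icc (0 : ℝ) (e n x y + r),
        e n (γ u) (γ v) = |u - v|)
    (x y : X) (r : ℝ) (hr : 0 < r) (hne : y ≠ x) :
    ∃ γ : ℝ → X, γ 0 = y ∧ γ (dist x y) = x ∧
      ∀ u ∈ Set.Icc (0 : ℝ) (dist x y + r + 1 / 2), ∀ v ∈ Set.Icc (0 : ℝ) (dist x y + r + 1 / 2),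
        dist (γ u) (γ v) = |u - v| := by
  set L := dist x y with hL
  have hL0 : 0 < L := dist_pos.2 hne.symm
  choose g hg0 hgx hg using fun n => hgeo n x y (r + 1) (by linarith) hne
  let U : Ultrafilter ℕ := hyperfilter ℕ
  have hU : (U : Filter ℕ) ≤ atTop := Nat.hyperfilter_le_atTop
  have hev : ∀ ε : ℝ, 0 < ε → ∀ᶠ n in (U : Filter ℕ), ∀ a b : X, |e n a b - dist a b| ≤ ε := by
    intro ε hε
    obtain ⟨N, hN⟩ := hconv ε hε
    exact hU (eventually_atTop.2 ⟨N, hN⟩)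
  have hIcc : ∀ᶠ n in (U : Filter ℕ), ∀ u ∈ Set.Icc (0 : ℝ) (L + r + 1 / 2),
      u ∈ Set.Icc (0 : ℝ) (e n x y + (r + 1)) := by
    filter_upwards [hev (1 / 2) (by norm_num)] with n hn u hu
    have := abs_le.1 (hn x y)
    exact ⟨hu.1, by linarith [hu.2]⟩
  have hK := isCompact_closedBall_of_approx y (exists_approx_intermediate e hconv hgeo y)
    (L + r + 1 / 2 + 1)
  have hlim : ∀ u : ℝ, ∃ p : X, u ∈ Set.Icc (0 : ℝ) (L + r + 1 / 2) →
      Tendsto (fun n => g n u) U (𝓝 p) := by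
    intro u
    by_cases hu : u ∈ Set.Icc (0 : ℝ) (L + r + 1 / 2)
    · obtain ⟨p, -, hp⟩ := hK.ultrafilter_le_nhds' (U.map fun n => g n u) (by
        change ∀ᶠ n in (U : Filter ℕ), g n u ∈ Metric.closedBall y (L + r + 1 / 2 + 1)
        filter_upwards [hev 1 one_pos, hIcc] with n hn hI
        have h1 := hg n u (hI u hu) 0 (hI 0 ⟨le_rfl, by linarith⟩)
        rw [hg0, sub_zero, abs_of_nonneg hu.1] at h1
        have h2 := abs_le.1 (hn (g n u) y)
        rw [Metric.mem_closedBall]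
        linarith [hu.2])
      exact ⟨p, fun _ => hp⟩
    · exact ⟨x, fun h => absurd h hu⟩
  choose γ hγ using hlim
  have hLmem : L ∈ Set.Icc (0 : ℝ) (L + r + 1 / 2) := ⟨hL0.le, by linarith⟩
  refine ⟨γ, ?_, ?_, ?_⟩
  · have h1 := hγ 0 ⟨le_rfl, by linarith⟩
    simp only [hg0] at h1
    exact (tendsto_nhds_unique h1 tendsto_const_nhds)
  · refine tendsto_nhds_unique (hγ L hLmem) ?_
    rw [Metric.tendsto_nhds]
    intro ε hε
    -- `g n` is at `x` at time `e n x y`, which is close to `L`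
    filter_upwards [hev (ε / 3) (by linarith), hIcc, hev (L / 2) (by linarith)] with n hn hI hn'
    have h2 := abs_le.1 (hn' x y)
    have h1 := hg n L (hI L hLmem) (e n x y) ⟨by linarith, by linarith⟩
    rw [hgx, abs_sub_comm] at h1
    have h3 := hn x y
    have h4 := abs_le.1 (hn (g n L) x)
    linarith
  · intro u hu v hv
    refine tendsto_nhds_unique ((hγ u hu).dist (hγ v hv)) ?_
    rw [Metric.tendsto_nhds]
    intro ε hε
    filter_upwards [hev (ε / 2) (by linarith), hIcc] with n hn hI
    have h1 := hn (g n u) (g n v)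
    rw [hg n u (hI u hu) v (hI v hv)] at h1
    rw [dist_comm, Real.dist_eq]
    linarith

/-- If complete, locally compact length metrics `d_n` on `X` converge uniformly to a complete,
locally compact length metric `d`, and each `(X, d_n)` satisfies the shooting property, then
`(X, d)` satisfies the shooting property. -/
theorem shooting_of_uniform_convergence
    {X : Type*} (D : MetricSpace X) (Dn : ℕ → MetricSpace X)
    (hD : IsLengthMetric D) (hDc : MComplete D) (hDl : MLocallyCompact D)
    (hDn : ∀ n, IsLengthMetric (Dn n)) (hDnc : ∀ n, MComplete (Dn n))
    (hDnl : ∀ n, MLocallyCompact (Dn n))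
    (hconv : ∀ ε : ℝ, 0 < ε → ∃ N : ℕ, ∀ n ≥ N, ∀ a b : X,
      |mdist (Dn n) a b - mdist D a b| ≤ ε)
    (hshoot : ∀ n, ∀ x : X, MShootingAt (Dn n) x) :
    ∀ x : X, MShootingAt D x := by
  have hgeo : ∀ n x y r, 0 < r → y ≠ x → ∃ γ : ℝ → X, γ 0 = y ∧ γ (mdist (Dn n) x y) = x ∧
      ∀ u ∈ Set.Icc (0 : ℝ) (mdist (Dn n) x y + r),
      ∀ v ∈ Set.Icc (0 : ℝ) (mdist (Dn n) x y + r),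
        mdist (Dn n) (γ u) (γ v) = |u - v| := by
    intro n x y r hr hne
    obtain ⟨p, -, γ, h0, hx, -, h⟩ := hshoot n x r hr y hne
    exact ⟨γ, h0, hx, h⟩
  let _ := D
  have : CompleteSpace X := hDc
  have : LocallyCompactSpace X := hDl
  intro x r hr y hne
  obtain ⟨γ, h0, hx, hγ⟩ :=
    exists_limit_geodesic (fun n => mdist (Dn n)) hconv hgeo x y r hr hne
  have hL : 0 ≤ dist x y := dist_nonneg
  have hdist : ∀ t : ℝ, 0 ≤ t → t ≤ r + 1 / 2 → dist (γ (dist x y + t)) x = t := by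
    intro t ht ht'
    have h1 := hγ (dist x y + t) ⟨by linarith, by linarith⟩ (dist x y) ⟨hL, by linarith⟩
    rwa [hx, add_sub_cancel_left, abs_of_nonneg ht] at h1
  refine ⟨γ (dist x y + r), ?_, γ, h0, hx, rfl, fun u hu v hv =>
    hγ u ⟨hu.1, by linarith [hu.2]⟩ v ⟨hv.1, by linarith [hv.2]⟩⟩
  rw [Metric.isClosed_closedBall.frontier_eq]
  refine ⟨Metric.mem_closedBall.2 (hdist r hr.le (by linarith)).le, fun hint => ?_⟩
  -- an interior point would have a neighbour further along `γ` still inside the ball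
  obtain ⟨ε, hε, hsub⟩ := Metric.isOpen_iff.1 isOpen_interior _ hint
  obtain ⟨η, hη, hηε, hη2⟩ : ∃ η : ℝ, 0 < η ∧ η < ε ∧ η ≤ 1 / 2 :=
    ⟨min (ε / 2) (1 / 2), lt_min (by linarith) (by norm_num),
      (min_le_left _ _).trans_lt (by linarith), min_le_right _ _⟩
  have hclose : γ (dist x y + (r + η)) ∈ Metric.ball (γ (dist x y + r)) ε := by
    rw [Metric.mem_ball, hγ _ ⟨by linarith, by linarith⟩ _ ⟨by linarith, by linarith⟩,
      show dist x y + (r + η) - (dist x y + r) = η by ring, abs_of_pos hη]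
    exact hηε
  have hin := Metric.mem_closedBall.1 (interior_subset (hsub hclose))
  rw [hdist (r + η) (by linarith) (by linarith)] at hin
  linarith
end

section
/- Let (X, d_X) and (Y, d_Y) be complete and locally compact length spaces and let X × Y carry the product metric d_{X×Y}((x,y),(a,b)) = √(d_X(x,a)² + d_Y(y,b)²). If x satisfies the shooting property in X and y satisfies the shooting property in Y, then (x,y) satisfies the shooting property in (X × Y, d_{X×Y}). -/
theorem mem_frontier_closedBall_of_approx {Z : Type*} [PseudoMetricSpace Z] {z p : Z} {r : ℝ}
    (hp : dist p z ≤ r) (h : ∀ ε > 0, ∃ q, dist p q < ε ∧ r < dist q z) :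
    p ∈ frontier (Metric.closedBall z r) := by
  rw [frontier_eq_closure_inter_closure]
  refine ⟨subset_closure hp, Metric.mem_closure_iff.2 fun ε hε => ?_⟩
  obtain ⟨q, hq, hr⟩ := h ε hε
  exact ⟨q, by simpa using hr, hq⟩

theorem exists_approx_of_mem_frontier_closedBall {Z : Type*} [PseudoMetricSpace Z] {z p : Z}
    {r : ℝ} (h : p ∈ frontier (Metric.closedBall z r)) {ε : ℝ} (hε : 0 < ε) :
    ∃ q, dist p q < ε ∧ r < dist q z := by
  rw [frontier_eq_closure_inter_closure] at h
  obtain ⟨q, hq, hpq⟩ := Metric.mem_closure_iff.1 h.2 ε hε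
  exact ⟨q, hpq, by simpa using hq⟩

/-- The shooting property reparameterized to constant speed `s`. The starting point `a` may equal
`x`; then `s = 0`, the curve is constant, and nothing is claimed about the frontier. -/
theorem ShootingAt.exists_affine {X : Type*} [MetricSpace X] {x : X} (hx : ShootingAt x) (a : X)
    {D r s : ℝ} (hD : 0 < D) (hr : 0 < r) (hs : 0 ≤ s) (hsD : s * D = dist x a) :
    ∃ f : ℝ → X, f 0 = a ∧ f D = x ∧
      (∀ u ∈ Set.Icc (0 : ℝ) (D + r), ∀ v ∈ Set.Icc (0 : ℝ) (D + r),
        dist (f u) (f v) = s * |u - v|) ∧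
      (0 < s → f (D + r) ∈ frontier (Metric.closedBall x (s * r))) := by
  rcases hs.eq_or_lt with rfl | hs
  · have hxa : x = a := dist_eq_zero.1 (by rw [← hsD, zero_mul])
    exact ⟨fun _ => x, hxa, rfl, by simp, fun h => absurd h (lt_irrefl _)⟩
  · have hxa : a ≠ x := by
      rintro rfl
      rw [dist_self] at hsD
      exact (mul_pos hs hD).ne' hsD
    obtain ⟨p, hp, γ, h0, h1, h2, h3⟩ := hx (s * r) (mul_pos hs hr) a hxa
    rw [← hsD] at h1 h2 h3
    have hmem : ∀ u ∈ Set.Icc (0 : ℝ) (D + r), s * u ∈ Set.Icc (0 : ℝ) (s * D + s * r) :=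
      fun u hu => ⟨mul_nonneg hs.le hu.1, by
        rw [← mul_add]; exact mul_le_mul_of_nonneg_left hu.2 hs.le⟩
    refine ⟨fun t => γ (s * t), by simpa using h0, h1, fun u hu v hv => ?_, fun _ => ?_⟩
    · rw [h3 _ (hmem u hu) _ (hmem v hv), ← mul_sub, abs_mul, abs_of_pos hs]
    · beta_reduce
      rw [mul_add, h2]
      exact hp

/-- Let `X`, `Y` be complete and locally compact length spaces and endow `X × Y` with the
`ℓ²`-product metric `d((x,y),(a,b)) = √(d_X(x,a)² + d_Y(y,b)²)` (realized as
`WithLp 2 (X × Y)`). If `x` satisfies the shooting property in `X` and `y` satisfies the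
shooting property in `Y`, then `(x,y)` satisfies the shooting property in the product. -/
theorem shooting_prod_l2
    {X Y : Type*} [MetricSpace X] [MetricSpace Y]
    [CompleteSpace X] [CompleteSpace Y] [LocallyCompactSpace X] [LocallyCompactSpace Y]
    (hX : IsLengthSpace X) (hY : IsLengthSpace Y)
    {x : X} {y : Y} (hx : ShootingAt x) (hy : ShootingAt y) :
    ShootingAt ((WithLp.equiv 2 (X × Y)).symm (x, y)) := by
  intro r hr c hc
  have hdist : ∀ p q : WithLp 2 (X × Y),
      dist p q = √(dist p.fst q.fst ^ 2 + dist p.snd q.snd ^ 2) := by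
    intro p q
    rw [WithLp.prod_dist_eq_add (by norm_num), Real.sqrt_eq_rpow]
    norm_num
  set z : WithLp 2 (X × Y) := (WithLp.equiv 2 (X × Y)).symm (x, y) with hz
  have hz1 : z.fst = x := rfl
  have hz2 : z.snd = y := rfl
  have hD : 0 < dist z c := dist_pos.2 hc.symm
  have hDsq : dist z c ^ 2 = dist x c.fst ^ 2 + dist y c.snd ^ 2 := by
    rw [hdist, Real.sq_sqrt (by positivity), hz1, hz2]
  set D := dist z c with hDdef
  obtain ⟨s, hs⟩ : ∃ s, s = dist x c.fst / D := ⟨_, rfl⟩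
  obtain ⟨t, ht⟩ : ∃ t, t = dist y c.snd / D := ⟨_, rfl⟩
  have hs0 : 0 ≤ s := by rw [hs]; positivity
  have ht0 : 0 ≤ t := by rw [ht]; positivity
  have hst : s ^ 2 + t ^ 2 = 1 := by
    rw [hs, ht, div_pow, div_pow, ← add_div, ← hDsq, div_self (by positivity)]
  obtain ⟨f, f0, fD, fd, fr⟩ := hx.exists_affine c.fst hD hr hs0 (by rw [hs]; field_simp)
  obtain ⟨g, g0, gD, gd, gr⟩ := hy.exists_affine c.snd hD hr ht0 (by rw [ht]; field_simp)
  have hmD : D ∈ Set.Icc (0 : ℝ) (D + r) := ⟨hD.le, by linarith⟩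
  have hmr : D + r ∈ Set.Icc (0 : ℝ) (D + r) := ⟨by linarith, le_rfl⟩
  have hγ : ∀ u ∈ Set.Icc (0 : ℝ) (D + r), ∀ v ∈ Set.Icc (0 : ℝ) (D + r),
      dist (WithLp.toLp 2 (f u, g u)) (WithLp.toLp 2 (f v, g v)) = |u - v| := by
    intro u hu v hv
    rw [hdist]
    change √(dist (f u) (f v) ^ 2 + dist (g u) (g v) ^ 2) = _
    rw [fd u hu v hv, gd u hu v hv, mul_pow, mul_pow, ← add_mul, hst, one_mul,
      Real.sqrt_sq (abs_nonneg _)]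
  have hzD : WithLp.toLp 2 (f D, g D) = z := by rw [fD, gD]; rfl
  have hfr : dist (f (D + r)) x = s * r := by
    have h := fd _ hmr _ hmD
    rwa [fD, add_sub_cancel_left, abs_of_pos hr] at h
  have hgr : dist (g (D + r)) y = t * r := by
    have h := gd _ hmr _ hmD
    rwa [gD, add_sub_cancel_left, abs_of_pos hr] at h
  refine ⟨WithLp.toLp 2 (f (D + r), g (D + r)), ?_, fun u => WithLp.toLp 2 (f u, g u), ?_, hzD,
    rfl, hγ⟩
  · refine mem_frontier_closedBall_of_approx ?_ fun ε hε => ?_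
    · rw [← hzD, hγ _ hmr _ hmD, add_sub_cancel_left, abs_of_pos hr]
    · have hr2 : (s * r) ^ 2 + (t * r) ^ 2 = r ^ 2 := by
        rw [mul_pow, mul_pow, ← add_mul, hst, one_mul]
      rcases hs0.eq_or_lt with h0 | hs1
      · have ht1 : 0 < t := ht0.lt_of_ne (by rintro rfl; rw [← h0] at hst; norm_num at hst)
        obtain ⟨q, hq, hqy⟩ := exists_approx_of_mem_frontier_closedBall (gr ht1) hε
        refine ⟨WithLp.toLp 2 (f (D + r), q), ?_, ?_⟩
        · rw [hdist]
          change √(dist (f (D + r)) (f (D + r)) ^ 2 + dist (g (D + r)) q ^ 2) < ε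
          rwa [dist_self, zero_pow two_ne_zero, zero_add, Real.sqrt_sq dist_nonneg]
        · rw [hdist]
          change r < √(dist (f (D + r)) x ^ 2 + dist q y ^ 2)
          rw [Real.lt_sqrt hr.le, hfr, ← hr2]
          gcongr
      · obtain ⟨q, hq, hqx⟩ := exists_approx_of_mem_frontier_closedBall (fr hs1) hε
        refine ⟨WithLp.toLp 2 (q, g (D + r)), ?_, ?_⟩
        · rw [hdist]
          change √(dist (f (D + r)) q ^ 2 + dist (g (D + r)) (g (D + r)) ^ 2) < ε
          rwa [dist_self, zero_pow two_ne_zero, add_zero, Real.sqrt_sq dist_nonneg]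
        · rw [hdist]
          change r < √(dist q x ^ 2 + dist (g (D + r)) y ^ 2)
          rw [Real.lt_sqrt hr.le, hgr, ← hr2]
          gcongr
  · change WithLp.toLp 2 (f 0, g 0) = c
    rw [f0, g0]
    rfl
end
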